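/- arXiv:2602.21060 — 2 statements merged into one kernel-verified Lean document; each statement's English description precedes it below -/
import Mathlib

section
/- Let f : H₁ → H₂ be an injective morphism of commutative Hopf algebras over a field k. Then H₂ is faithfully flat as an H₁-module (Takeuchi's theorem). -/
/-!
The proof treats more generally the Hopf modules `H ⧸ B`, where `A ⊆ H` is the inclusion of Hopf
algebras and `B` is an `A`-submodule of `H` with `Δ B ⊆ B ⊗ H`. They are all flat over `A`
(`flat_quotient_of_costable`). Indeed `H ⧸ B` is the directed union of the `A`-submodules `M`
generated by the images of finite-dimensional subcomodules `V` of `H`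
(`exists_subcomodule_forall`). Applying the coaction `A → A ⊗ H` to the relations of `M` gives
relations again, up to the invertible coefficient matrix of `V`
(`exists_matrix_of_isSubcomodule`). By multilinearity of minors (`det_mem_of_mem_span`), the Fitting
ideals of `M` are stable under the coaction. But a costable ideal of `A` is `0` or `A`
(`ideal_eq_bot_or_top_of_costable`), and a finitely generated module all of whose Fitting ideals are
trivial is projective (`flat_quotient_of_minorIdeal`).

The case `B = 0` gives flatness of `H`. The case `B = A` gives flatness of `H ⧸ A`, so `A → H` is
pure, and hence `𝔪 H ≠ H` for every maximal ideal `𝔪` of `A`.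
-/

open TensorProduct Coalgebra

/-! ### Determinantal ideals -/

/-- The ideal generated by the `j × j` minors of matrices whose rows lie in `N ⊆ R^ι`; a determinantal
(Fitting) ideal of the module `R^ι ⧸ N`. The columns are selected by an arbitrary map `s`, as a
repeated column contributes only `0`. -/
def minorIdeal {R ι : Type*} [CommRing R] (N : Submodule R (ι → R)) (j : ℕ) : Ideal R :=
  Ideal.span {d | ∃ (a : Fin j → ι → R) (s : Fin j → ι),
    (∀ l, a l ∈ N) ∧ d = Matrix.det (Matrix.of fun l i => a l (s i))}

theorem minorIdeal_zero {R ι : Type*} [CommRing R] (N : Submodule R (ι → R)) :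
    minorIdeal N 0 = ⊤ := by
  rw [Ideal.eq_top_iff_one]
  exact Ideal.subset_span ⟨Fin.elim0, Fin.elim0, fun l => l.elim0, by simp⟩

theorem minorIdeal_eq_bot {R ι : Type*} [CommRing R] [Fintype ι] (N : Submodule R (ι → R))
    {j : ℕ} (hj : Fintype.card ι < j) : minorIdeal N j = ⊥ := by
  rw [minorIdeal, Ideal.span_eq_bot]
  rintro _ ⟨a, s, -, rfl⟩
  obtain ⟨p, q, hpq, h⟩ := Fintype.exists_ne_map_eq_of_card_lt s (by simpa using hj)
  exact Matrix.det_zero_of_column_eq hpq (by simp [h])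

/-- Cramer's rule: if all `(j + 1)`-minors of `N` vanish, every `j`-minor `d` admits a linear map
`R^ι → N` that restricts to multiplication by `d` on `N`. -/
theorem exists_smul_retraction {R ι : Type*} [CommRing R] (N : Submodule R (ι → R)) {j : ℕ}
    (h : minorIdeal N (j + 1) = ⊥) {d : R} (hd : d ∈ minorIdeal N j) :
    ∃ π : (ι → R) →ₗ[R] (ι → R), (∀ x, π x ∈ N) ∧ ∀ x ∈ N, π x = d • x := by
  induction hd using Submodule.span_induction with
  | zero => exact ⟨0, by simp, by simp⟩
  | add d e _ _ hd he =>
    obtain ⟨π, h1, h2⟩ := hd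
    obtain ⟨π', h1', h2'⟩ := he
    exact ⟨π + π', fun x => N.add_mem (h1 x) (h1' x), fun x hx => by
      simp [h2 x hx, h2' x hx, add_smul]⟩
  | smul c d _ hd =>
    obtain ⟨π, h1, h2⟩ := hd
    exact ⟨c • π, fun x => N.smul_mem _ (h1 x), fun x hx => by
      simp [h2 x hx, mul_smul]⟩
  | mem d hd =>
    obtain ⟨a, s, ha, rfl⟩ := hd
    -- the rows `x, a 0, …, a (j - 1)` with `a l` removed, in the columns selected by `s`
    let M (x : ι → R) (l : Fin j) : Matrix (Fin j) (Fin j) R :=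
      Matrix.of fun m i => (Fin.cons x a : Fin (j + 1) → ι → R) (l.succ.succAbove m) (s i)
    have key : ∀ l : Fin j, ∃ ψ : (ι → R) →ₗ[R] R, ∀ x, ψ x = (M x l).det := by
      intro l
      obtain ⟨j, rfl⟩ : ∃ i, j = i + 1 := ⟨j - 1, by have := l.pos; omega⟩
      have hM : ∀ x, M x l = (M 0 l).updateRow 0 (fun i => x (s i)) := by
        intro x
        ext m i
        refine Fin.cases ?_ (fun m => ?_) m
        · simp [M]
        · simp [M]
      refine ⟨⟨⟨fun x => (M x l).det, fun x y => ?_⟩, fun c x => ?_⟩, fun x => rfl⟩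
      · rw [hM (x + y), hM x, hM y, ← Matrix.det_updateRow_add]; rfl
      · change (M (c • x) l).det = c • (M x l).det
        rw [hM (c • x), hM x]
        exact Matrix.det_updateRow_smul (M 0 l) 0 c (fun i => x (s i))
    choose ψ hψ using key
    refine ⟨-∑ l : Fin j, (-1) ^ ((l : ℕ) + 1) • (ψ l).smulRight (a l), fun x => ?_, fun x hx => ?_⟩
    · simp only [LinearMap.neg_apply, LinearMap.sum_apply, LinearMap.smul_apply,
        LinearMap.smulRight_apply]
      refine N.neg_mem (N.sum_mem fun l _ => ?_)
      rcases neg_one_pow_eq_or ℤ ((l : ℕ) + 1) with e | e <;> rw [e] <;>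
        simp [N.smul_mem _ (ha l)]
    · ext t
      -- expand the vanishing `(j + 1)`-minor with extra row `x` and extra column `t` along
      -- that column
      have h0 : Matrix.det (Matrix.of fun l i => (Fin.cons x a : Fin (j + 1) → ι → R) l
          ((Fin.cons t s : Fin (j + 1) → ι) i)) = 0 := by
        have : _ ∈ minorIdeal N (j + 1) := Ideal.subset_span
          ⟨(Fin.cons x a : Fin (j + 1) → ι → R), (Fin.cons t s : Fin (j + 1) → ι),
            fun l => Fin.cases (by simpa using hx) (fun l => by simpa using ha l) l, rfl⟩
        rw [h] at this
        simpa using this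
      rw [Matrix.det_succ_column_zero, Fin.sum_univ_succ] at h0
      simp only [LinearMap.neg_apply, LinearMap.sum_apply, LinearMap.smul_apply,
        LinearMap.smulRight_apply, hψ, Pi.neg_apply, Finset.sum_apply, Pi.smul_apply,
        smul_eq_mul]
      rw [neg_eq_iff_add_eq_zero, add_comm, ← h0]
      congr 1
      · simp [Matrix.submatrix, mul_comm]
      · refine Finset.sum_congr rfl fun l _ => ?_
        simp [Matrix.submatrix, M, mul_comm, mul_assoc, mul_left_comm]

/-- If all determinantal ideals of `N ⊆ R^ι` are trivial, `N` is a direct summand, so the quotient is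
projective. -/
theorem flat_quotient_of_minorIdeal {R ι : Type*} [CommRing R] [Fintype ι]
    (N : Submodule R (ι → R)) (h : ∀ j, minorIdeal N j = ⊥ ∨ minorIdeal N j = ⊤) :
    Module.Flat R ((ι → R) ⧸ N) := by
  classical
  obtain ⟨j, hj, hj'⟩ : ∃ j, minorIdeal N j = ⊤ ∧ minorIdeal N (j + 1) = ⊥ := by
    by_contra! H
    have : ∀ j, minorIdeal N j = ⊤ := by
      intro j
      induction j with
      | zero => exact minorIdeal_zero N
      | succ j ih => exact (h _).resolve_left (H j ih)
    exact H (Fintype.card ι) (this _) (minorIdeal_eq_bot N (Nat.lt_succ_self _))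
  obtain ⟨π, h1, h2⟩ := exists_smul_retraction N hj' (d := 1) (by simp [hj])
  have : Module.Projective R ((ι → R) ⧸ N) := by
    refine Module.Projective.of_split (N.liftQ (LinearMap.id - π) fun x hx => ?_) N.mkQ ?_
    · simp [h2 x hx]
    · refine Submodule.linearMap_qext _ (LinearMap.ext fun x => ?_)
      simpa using h1 x
  infer_instance

/-- Multilinear expansion of minors in rows and in columns: minors of `D y`, for vectors `y` in the
extension of scalars of `N`, lie in the extension of the ideal of minors of `N`. -/
theorem det_mem_of_mem_span {R R' ι : Type*} [CommRing R] [CommRing R'] [Fintype ι]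
    (φ : R →+* R') (N : Submodule R (ι → R)) {j : ℕ} (D : Matrix ι ι R')
    (y : Fin j → ι → R')
    (hy : ∀ l, y l ∈ Submodule.span R' ((fun x : ι → R => φ ∘ x) '' (N : Set (ι → R))))
    (s : Fin j → ι) :
    Matrix.det (Matrix.of fun l i => D.mulVec (y l) (s i)) ∈ (minorIdeal N j).map φ := by
  classical
  simp only [Submodule.mem_span_set'] at hy
  choose n c g hg using hy
  have hx : ∀ l m, ∃ x ∈ N, (g l m : ι → R') = φ ∘ x := fun l m => by
    obtain ⟨x, hx, h⟩ := (g l m).2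
    exact ⟨x, hx, h.symm⟩
  choose x hxN hx using hx
  -- expansion in the rows
  have hrow : (Matrix.of fun l i => D.mulVec (y l) (s i)) =
      fun l => ∑ m, c l m • fun i => D.mulVec (φ ∘ x l m) (s i) := by
    ext l i
    rw [Matrix.of_apply, ← hg l, Matrix.mulVec_sum]
    simp [Matrix.mulVec_smul, hx]
  rw [hrow]
  have := (Matrix.detRowAlternating (R := R') (n := Fin j)).toMultilinearMap.map_sum
    (fun l m => c l m • fun i => D.mulVec (φ ∘ x l m) (s i))
  change Matrix.det _ = _ at this
  rw [this]
  refine Ideal.sum_mem _ fun r _ => ?_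
  have := (Matrix.detRowAlternating (R := R') (n := Fin j)).toMultilinearMap.map_smul_univ
    (fun l => c l (r l)) (fun l i => D.mulVec (φ ∘ x l (r l)) (s i))
  rw [this]
  refine Ideal.mul_mem_left _ _ ?_
  change Matrix.det (Matrix.of fun l i => D.mulVec (φ ∘ x l (r l)) (s i)) ∈ _
  rw [← Matrix.det_transpose]
  -- expansion in the columns
  have hcol : Matrix.transpose (Matrix.of fun l i => D.mulVec (φ ∘ x l (r l)) (s i)) =
      fun i => ∑ t, D (s i) t • fun l => φ (x l (r l) t) := by
    ext i l
    simp [Matrix.mulVec, dotProduct]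
  rw [hcol]
  have := (Matrix.detRowAlternating (R := R') (n := Fin j)).toMultilinearMap.map_sum
    (fun i t => D (s i) t • fun l => φ (x l (r l) t))
  change Matrix.det _ = _ at this
  rw [this]
  refine Ideal.sum_mem _ fun t _ => ?_
  have := (Matrix.detRowAlternating (R := R') (n := Fin j)).toMultilinearMap.map_smul_univ
    (fun i => D (s i) (t i)) (fun i l => φ (x l (r l) (t i)))
  rw [this]
  refine Ideal.mul_mem_left _ _ ?_
  change Matrix.det (Matrix.of fun i l => φ (x l (r l) (t i))) ∈ _
  rw [← Matrix.det_transpose]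
  have : (Matrix.transpose (Matrix.of fun i l => φ (x l (r l) (t i)))) =
    φ.mapMatrix (Matrix.of fun l i => x l (r l) (t i)) := rfl
  rw [this, ← RingHom.map_det]
  exact Ideal.mem_map_of_mem _ (Ideal.subset_span ⟨_, t, fun l => hxN l (r l), rfl⟩)

/-! ### Costable ideals and subcomodules -/

/-- A Hopf subalgebra `A ⊆ H` has no nontrivial `H`-costable ideals. Over a field,
`I ⊗ H ∩ A ⊗ A = I ⊗ A`, so `Δ x ∈ I ⊗ A` for `x ∈ I`; then `∑ x₁ S(x₂) = ε(x)` lies in `I`,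
and if `ε` kills `I`, then `x = ∑ ε(x₁) x₂ = 0`. -/
theorem ideal_eq_bot_or_top_of_costable {k A H : Type*} [Field k] [CommRing A] [CommRing H]
    [HopfAlgebra k A] [HopfAlgebra k H] (f : A →ₐc[k] H) (hf : Function.Injective f)
    (I : Ideal A)
    (hI : ∀ x ∈ I, (f : A →ₗ[k] H).lTensor A (comul (R := k) x) ∈
      I.map (Algebra.TensorProduct.includeLeft : A →ₐ[k] A ⊗[k] H)) :
    I = ⊥ ∨ I = ⊤ := by
  let q : A →ₐ[k] A ⧸ I := Ideal.Quotient.mkₐ k I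
  have hq : ∀ a, q a = 0 ↔ a ∈ I := fun a => Ideal.Quotient.eq_zero_iff_mem
  have h0 : ∀ x ∈ I, q.toLinearMap.rTensor A (comul (R := k) x) = 0 := by
    intro x hx
    -- `(A ⧸ I) ⊗ A → (A ⧸ I) ⊗ H` is injective, and `Δ x` dies in its target
    apply Module.Flat.lTensor_preserves_injective_linearMap (M := A ⧸ I) (f : A →ₗ[k] H) hf
    rw [map_zero, ← LinearMap.comp_apply, LinearMap.lTensor_comp_rTensor,
      ← LinearMap.rTensor_comp_lTensor, LinearMap.comp_apply]
    have : I.map (Algebra.TensorProduct.includeLeft : A →ₐ[k] A ⊗[k] H) ≤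
        RingHom.ker (Algebra.TensorProduct.map q (AlgHom.id k H)) := by
      rw [Ideal.map_le_iff_le_comap]
      intro a ha
      simp [Ideal.mem_comap, RingHom.mem_ker, (hq a).2 ha]
    exact this (hI x hx)
  have h1 : ∀ x ∈ I, algebraMap k A (counit x) ∈ I := by
    intro x hx
    rw [← HopfAlgebra.mul_antipode_lTensor_comul_apply, ← hq]
    have : q.toLinearMap ∘ₗ LinearMap.mul' k A ∘ₗ (HopfAlgebra.antipode k).lTensor A =
        (LinearMap.mul' k (A ⧸ I) ∘ₗ (q.toLinearMap ∘ₗ HopfAlgebra.antipode k).lTensor (A ⧸ I)) ∘ₗ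
          q.toLinearMap.rTensor A := by
      ext a b
      simp
    have := LinearMap.congr_fun this (comul (R := k) x)
    simp only [LinearMap.comp_apply, h0 x hx, map_zero] at this
    exact this
  by_cases h : ∃ x ∈ I, counit (R := k) x ≠ 0
  · obtain ⟨x, hx, hne⟩ := h
    right
    exact Ideal.eq_top_of_isUnit_mem _ (h1 x hx) ((IsUnit.mk0 _ hne).map _)
  · left
    push Not at h
    rw [eq_bot_iff]
    intro x hx
    let e : (A ⧸ I) →ₗ[k] k :=
      (Ideal.Quotient.liftₐ I (Bialgebra.counitAlgHom k A) (fun a ha => h a ha)).toLinearMap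
    have he : e ∘ₗ q.toLinearMap = counit := by
      ext a
      rfl
    have h2 := rTensor_counit_comul (R := k) x
    rw [← he, LinearMap.rTensor_comp, LinearMap.comp_apply, h0 x hx, map_zero] at h2
    simpa using (congrArg (TensorProduct.lid k A) h2).symm

/-- A subspace `V` of a coalgebra `H` is a (right) subcomodule if `Δ V ⊆ V ⊗ H`, the latter being
encoded as the range of `V ⊗ H → H ⊗ H`. -/
def IsSubcomodule {k H : Type*} [Field k] [AddCommGroup H] [Module k H] [Coalgebra k H]
    (V : Submodule k H) : Prop :=
  V ≤ (LinearMap.range (V.subtype.rTensor H)).comap (comul (R := k))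

/-- Local finiteness of comodules: the vectors `(id ⊗ φ) (Δ h)`, for `φ` a linear form, form a
finite-dimensional right subcomodule, which contains `h` (take `φ` to be the counit). -/
theorem exists_subcomodule {k H : Type*} [Field k] [AddCommGroup H] [Module k H] [Coalgebra k H]
    (h : H) : ∃ V : Submodule k H, V.FG ∧ IsSubcomodule V ∧ h ∈ V := by
  -- `T φ = (id ⊗ φ) (Δ h)`
  let T : (H →ₗ[k] k) →ₗ[k] H :=
    (TensorProduct.rid k H).toLinearMap ∘ₗ LinearMap.applyₗ (comul (R := k) h) ∘ₗ
      LinearMap.lTensorHom H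
  have hT : ∀ φ, T φ = TensorProduct.rid k H (φ.lTensor H (comul (R := k) h)) := fun φ => rfl
  have hmem : comul (R := k) h ∈ LinearMap.range ((LinearMap.range T).subtype.rTensor H) := by
    let b := Module.Basis.ofVectorSpace k H
    obtain ⟨c, hc⟩ := TensorProduct.eq_repr_basis_right b (comul (R := k) h)
    have hci : ∀ i, c i = T (b.coord i) := by
      intro i
      rw [hT, ← hc]
      classical
      simp only [Finsupp.sum, map_sum, LinearMap.lTensor_tmul, Module.Basis.coord_apply,
        Module.Basis.repr_self, Finsupp.single_apply, TensorProduct.rid_tmul, ite_smul, one_smul,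
        zero_smul, Finset.sum_ite_eq']
      split_ifs with h <;> simp_all
    rw [← hc]
    refine Submodule.sum_mem _ fun i _ => ?_
    exact ⟨⟨c i, b.coord i, (hci i).symm⟩ ⊗ₜ b i, by simp⟩
  refine ⟨LinearMap.range T, ?_, ?_, ?_⟩
  · obtain ⟨n, x, y, hxy⟩ := TensorProduct.exists_sum_tmul_eq (comul (R := k) h)
    have := FiniteDimensional.span_of_finite k (Set.finite_range x)
    refine Module.Finite.iff_fg.1
      (Submodule.finiteDimensional_of_le (S₂ := Submodule.span k (Set.range x)) ?_)
    rintro _ ⟨φ, rfl⟩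
    rw [hT, hxy]
    simp only [map_sum, LinearMap.lTensor_tmul, TensorProduct.rid_tmul]
    exact Submodule.sum_mem _ fun i _ => Submodule.smul_mem _ _ (Submodule.subset_span ⟨i, rfl⟩)
  · rintro _ ⟨φ, rfl⟩
    rw [Submodule.mem_comap]
    -- coassociativity: `Δ (T φ) = (id ⊗ u) (Δ h)` with `u = (id ⊗ φ) ∘ Δ`
    have : comul (R := k) (T φ) =
        ((TensorProduct.rid k H).toLinearMap ∘ₗ φ.lTensor H ∘ₗ comul).lTensor H
          (comul (R := k) h) := by
      have h1 : (comul (R := k) (A := H)) ∘ₗ (TensorProduct.rid k H).toLinearMap ∘ₗ φ.lTensor H =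
          ((TensorProduct.rid k H).toLinearMap ∘ₗ φ.lTensor H).lTensor H ∘ₗ
          (TensorProduct.assoc k H H H).toLinearMap ∘ₗ comul.rTensor H := by
        ext a b
        obtain ⟨n, x, y, hxy⟩ := TensorProduct.exists_sum_tmul_eq (comul (R := k) a)
        simp [hxy, TensorProduct.sum_tmul, Finset.smul_sum]
      have := LinearMap.congr_fun h1 (comul (R := k) h)
      simp only [LinearMap.comp_apply, LinearEquiv.coe_coe, coassoc_apply] at this
      rw [hT, this, ← LinearMap.comp_apply, ← LinearMap.lTensor_comp, LinearMap.comp_assoc]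
    rw [this]
    obtain ⟨z, hz⟩ := hmem
    rw [← hz, ← LinearMap.comp_apply, LinearMap.lTensor_comp_rTensor,
      ← LinearMap.rTensor_comp_lTensor]
    exact ⟨_, rfl⟩
  · exact ⟨counit, by rw [hT, lTensor_counit_comul]; simp⟩

theorem exists_subcomodule_forall {k H : Type*} [Field k] [AddCommGroup H] [Module k H]
    [Coalgebra k H] {n : ℕ} (h : Fin n → H) :
    ∃ V : Submodule k H, V.FG ∧ IsSubcomodule V ∧ ∀ i, h i ∈ V := by
  choose V hfg hV hh using fun i => exists_subcomodule (k := k) (h i)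
  refine ⟨⨆ i, V i, Submodule.fg_iSup _ hfg, iSup_le fun i => (hV i).trans ?_,
    fun i => le_iSup V i (hh i)⟩
  refine Submodule.comap_mono ?_
  rw [← Submodule.subtype_comp_inclusion _ _ (le_iSup V i), LinearMap.rTensor_comp]
  exact LinearMap.range_comp_le_range _ _

/-- The matrix `C` of the coaction in a basis of a finite-dimensional subcomodule is
invertible: `Δ(C) = C ⊗ C` and `ε(C) = 1`, so `S(C)` is an inverse. -/
theorem exists_matrix_of_isSubcomodule {k H : Type*} [Field k] [CommRing H] [HopfAlgebra k H]
    (V : Submodule k H) (hfg : V.FG) (hV : IsSubcomodule V) :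
    ∃ (n : ℕ) (v : Fin n → H) (C D : Matrix (Fin n) (Fin n) H),
      V ≤ Submodule.span k (Set.range v) ∧
      (∀ i, comul (R := k) (v i) = ∑ j, v j ⊗ₜ C j i) ∧ D * C = 1 := by
  classical
  have : Module.Finite k V := Module.Finite.iff_fg.2 hfg
  let b := Module.finBasis k V
  have hc : ∀ i, ∃ c : Fin (Module.finrank k V) → H,
      comul (R := k) (b i : H) = ∑ j, (b j : H) ⊗ₜ c j := by
    intro i
    obtain ⟨z, hz⟩ := hV (b i).2
    obtain ⟨c, hc⟩ := TensorProduct.eq_repr_basis_left b z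
    refine ⟨c, ?_⟩
    rw [← hz, ← hc, Finsupp.sum_fintype _ _ (by simp)]
    simp
  choose c hc using hc
  obtain ⟨r, hr⟩ := LinearMap.exists_leftInverse_of_injective V.subtype V.ker_subtype
  -- linear forms on `H` extending the dual basis; `c i j = (L j ⊗ id) (Δ (b i))`
  let L : Fin (Module.finrank k V) → H →ₗ[k] k := fun j => b.coord j ∘ₗ r
  have hL : ∀ i j, L j (b i : H) = if i = j then 1 else 0 := by
    intro i j
    have : r (b i : H) = b i := LinearMap.congr_fun hr (b i)
    simp [L, this, Finsupp.single_apply]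
  have hcounit : ∀ i j, counit (R := k) (c i j) = if i = j then 1 else 0 := by
    intro i j
    have := lTensor_counit_comul (R := k) (b i : H)
    rw [hc] at this
    have := congrArg (fun z => L j (TensorProduct.rid k H z)) this
    simpa [hL] using this
  have hcomul : ∀ i j, comul (R := k) (c i j) = ∑ m, c m j ⊗ₜ c i m := by
    intro i j
    have := coassoc_apply (R := k) (b i : H)
    rw [hc] at this
    simp only [map_sum, LinearMap.rTensor_tmul, LinearMap.lTensor_tmul, hc,
      TensorProduct.sum_tmul, TensorProduct.assoc_tmul] at this
    have := congrArg (fun z => TensorProduct.lid k (H ⊗[k] H) ((L j).rTensor (H ⊗[k] H) z)) this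
    simpa [hL, map_sum] using this.symm
  refine ⟨_, fun i => (b i : H), Matrix.of fun j i => c i j,
    Matrix.of fun j i => HopfAlgebra.antipode k (c i j), ?_, ?_, ?_⟩
  · intro x hx
    have := congrArg V.subtype (b.sum_repr ⟨x, hx⟩)
    simp only [map_sum, map_smul, Submodule.subtype_apply] at this
    rw [← this]
    exact Submodule.sum_mem _ fun i _ => Submodule.smul_mem _ _ (Submodule.subset_span ⟨i, rfl⟩)
  · intro i
    simpa using hc i
  · ext j i
    have := HopfAlgebra.mul_antipode_rTensor_comul_apply (R := k) (c i j)
    rw [hcomul, hcounit] at this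
    simp only [map_sum, LinearMap.rTensor_tmul, LinearMap.mul'_apply] at this
    simp only [Matrix.mul_apply, Matrix.of_apply, this, Matrix.one_apply]
    rcases eq_or_ne j i with rfl | h
    · simp
    · simp [h, h.symm]

/-! ### Flatness of Hopf modules -/

/-- Since `H` is flat over `k`, the kernel of `g ⊗ H : A^ι ⊗ H → Q ⊗ H` is `ker g ⊗ H`; here `A^ι ⊗ H`
is identified with `(A ⊗ H)^ι`. -/
theorem exists_mem_tensor_ker {k A H Q ι : Type*} [Field k] [CommRing A] [CommRing H]
    [Algebra k A] [Algebra k H] [AddCommGroup Q] [Module k Q] [Module A Q] [IsScalarTower k A Q]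
    [Fintype ι] [DecidableEq ι] (g : (ι → A) →ₗ[A] Q) (y : ι → A ⊗[k] H)
    (hy : ∑ j, (g.restrictScalars k ∘ₗ LinearMap.single k (fun _ : ι => A) j).rTensor H (y j) = 0) :
    y ∈ Submodule.span (A ⊗[k] H)
      ((fun x : ι → A => (Algebra.TensorProduct.includeLeft : A →ₐ[k] A ⊗[k] H) ∘ x) ''
        (LinearMap.ker g : Set (ι → A))) := by
  let g' := g.restrictScalars k
  let z : (ι → A) ⊗[k] H := ∑ j, (LinearMap.single k (fun _ : ι => A) j).rTensor H (y j)
  let Θ : (ι → A) ⊗[k] H →ₗ[k] (ι → A ⊗[k] H) :=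
    LinearMap.pi fun i => (LinearMap.proj i : (ι → A) →ₗ[k] A).rTensor H
  have hz : g'.rTensor H z = 0 := by
    rw [← hy, map_sum]
    simp only [LinearMap.rTensor_comp, LinearMap.comp_apply, g']
  have hΘ : Θ z = y := by
    ext i
    simp only [Θ, z, LinearMap.pi_apply, map_sum, ← LinearMap.comp_apply, ← LinearMap.rTensor_comp]
    rw [Finset.sum_eq_single i]
    · rw [LinearMap.proj_comp_single_same, LinearMap.rTensor_id, LinearMap.id_apply]
    · intro j _ hj
      rw [LinearMap.proj_comp_single_ne _ _ _ _ hj.symm]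
      simp
    · simp
  have hex : Function.Exact ((LinearMap.ker g').subtype.rTensor H) (g'.rTensor H) :=
    Module.Flat.rTensor_exact H (LinearMap.exact_subtype_ker_map g')
  obtain ⟨w, hw⟩ := (hex z).1 hz
  rw [← hΘ, ← hw]
  clear hw
  induction w using TensorProduct.induction_on with
  | zero => simp
  | add a b ha hb => rw [map_add, map_add]; exact Submodule.add_mem _ ha hb
  | tmul x h =>
    have : Θ ((LinearMap.ker g').subtype.rTensor H (x ⊗ₜ h)) = ((1 : A) ⊗ₜ[k] h) •
        ((Algebra.TensorProduct.includeLeft : A →ₐ[k] A ⊗[k] H) ∘ (x : ι → A)) := by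
      ext i
      simp [Θ]
    rw [this]
    exact Submodule.smul_mem _ _ (Submodule.subset_span ⟨x, x.2, rfl⟩)

/-- If `B ⊆ H` is an `A`-submodule with `Δ B ⊆ B ⊗ H` (that is, `Δ B` dies in `(H ⧸ B) ⊗ H`), then the
Hopf module `H ⧸ B` is flat over `A`. -/
theorem flat_quotient_of_costable {k A H : Type*} [Field k] [CommRing A] [CommRing H]
    [HopfAlgebra k A] [HopfAlgebra k H] (f : A →ₐc[k] H) (hf : Function.Injective f)
    [Algebra A H] [IsScalarTower k A H] (hfA : ∀ a, algebraMap A H a = f a)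
    (B : Submodule A H)
    (hB : ∀ b ∈ B, (B.mkQ.restrictScalars k).rTensor H (comul (R := k) b) = 0) :
    Module.Flat A (H ⧸ B) := by
  refine Module.Flat.of_forall_isTrivialRelation fun {l r x} hrx => ?_
  choose x' hx' using fun i => B.mkQ_surjective (x i)
  obtain ⟨V, hfg, hV, hxV⟩ := exists_subcomodule_forall (k := k) x'
  obtain ⟨n, v, C, D, hspan, hC, hDC⟩ := exists_matrix_of_isSubcomodule V hfg hV
  let g : (Fin n → A) →ₗ[A] H ⧸ B := Fintype.linearCombination A (fun i => B.mkQ (v i))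
  have hg : ∀ a, g a = B.mkQ (∑ i, f (a i) * v i) := by
    intro a
    simp [g, Fintype.linearCombination_apply, ← hfA, ← Algebra.smul_def]
  -- the coaction of `H` on `A`
  let φ : A →ₐ[k] A ⊗[k] H :=
    (Algebra.TensorProduct.map (AlgHom.id k A) (f : A →ₐ[k] H)).comp (Bialgebra.comulAlgHom k A)
  let inr : H →ₐ[k] A ⊗[k] H := Algebra.TensorProduct.includeRight
  let F : A ⊗[k] H →ₐ[k] H ⊗[k] H :=
    Algebra.TensorProduct.map (f : A →ₐ[k] H) (AlgHom.id k H)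
  -- `F ∘ φ = Δ ∘ f`, as `f` is a coalgebra morphism
  have hFφ : ∀ a, F (φ a) = comul (R := k) (f a) := by
    intro a
    have h1 := LinearMap.congr_fun (CoalgHomClass.map_comp_comul f) a
    have h2 : F.toLinearMap ∘ₗ
        (Algebra.TensorProduct.map (AlgHom.id k A) (f : A →ₐ[k] H)).toLinearMap =
        TensorProduct.map (f : A →ₗ[k] H) (f : A →ₗ[k] H) := by
      ext a b
      simp [F]
    have h3 := LinearMap.congr_fun h2 (comul (R := k) a)
    exact h3.trans h1
  -- `C` times the coaction of a relation is a relation with coefficients in `A ⊗ H`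
  have hspan_ker : ∀ a ∈ LinearMap.ker g, (C.map inr).mulVec (φ ∘ a) ∈
      Submodule.span (A ⊗[k] H)
      ((fun x : Fin n → A => (Algebra.TensorProduct.includeLeft : A →ₐ[k] A ⊗[k] H) ∘ x) ''
        (LinearMap.ker g : Set (Fin n → A))) := by
    intro a ha
    apply exists_mem_tensor_ker
    have hstep : ∀ j (u : A ⊗[k] H),
        (g.restrictScalars k ∘ₗ LinearMap.single k (fun _ => A) j).rTensor H u =
          (B.mkQ.restrictScalars k).rTensor H (F u * (v j ⊗ₜ 1)) := by
      intro j u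
      induction u using TensorProduct.induction_on with
      | zero => simp
      | add a b ha hb => rw [map_add, ha, hb, map_add, add_mul, map_add]
      | tmul b h =>
        simp only [LinearMap.rTensor_tmul, LinearMap.comp_apply, LinearMap.restrictScalars_apply, hg]
        simp [F, Pi.single_apply, apply_ite f, ite_mul]
    simp only [hstep]
    rw [← map_sum]
    have hmem : ∑ i, f (a i) * v i ∈ B := by
      rwa [LinearMap.mem_ker, hg, Submodule.mkQ_apply, Submodule.Quotient.mk_eq_zero] at ha
    convert hB _ hmem using 2
    rw [map_sum]
    simp only [Bialgebra.comul_mul, ← hFφ, hC, Matrix.mulVec, dotProduct, map_sum, Finset.sum_mul,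
      Finset.mul_sum]
    rw [Finset.sum_comm]
    refine Finset.sum_congr rfl fun i _ => Finset.sum_congr rfl fun j _ => ?_
    simp only [map_mul, Matrix.map_apply, Function.comp_apply]
    have hvC : F (inr (C j i)) * (v j ⊗ₜ 1) = v j ⊗ₜ C j i := by simp [F, inr]
    rw [← hvC]
    ring
  -- multiplying by `C⁻¹`, the minors of the relations generate costable ideals
  have hflat : Module.Flat A ((Fin n → A) ⧸ LinearMap.ker g) := by
    refine flat_quotient_of_minorIdeal _ fun j => ideal_eq_bot_or_top_of_costable f hf _ ?_
    suffices h : minorIdeal (LinearMap.ker g) j ≤ Ideal.comap φ ((minorIdeal (LinearMap.ker g) j).map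
        (Algebra.TensorProduct.includeLeft : A →ₐ[k] A ⊗[k] H)) from fun x hx => h hx
    conv_lhs => rw [minorIdeal]
    rw [Ideal.span_le]
    rintro _ ⟨a, s, ha, rfl⟩
    rw [SetLike.mem_coe, Ideal.mem_comap, AlgHom.map_det]
    have hmat : φ.mapMatrix (Matrix.of fun l i => a l (s i)) =
        Matrix.of fun l i => (D.map inr).mulVec ((C.map inr).mulVec (φ ∘ a l)) (s i) := by
      have hDC' : D.map inr * C.map inr = 1 := by
        rw [← Matrix.map_mul, hDC, Matrix.map_one _ (map_zero _) (map_one _)]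
      refine Matrix.ext fun l i => ?_
      simp [Matrix.mulVec_mulVec, hDC']
    rw [hmat]
    exact det_mem_of_mem_span
      (Algebra.TensorProduct.includeLeft : A →ₐ[k] A ⊗[k] H).toRingHom (LinearMap.ker g)
      (D.map inr) (fun l => (C.map inr).mulVec (φ ∘ a l)) (fun l => hspan_ker _ (ha l)) s
  have hxg : ∀ i, ∃ e, g e = x i := by
    intro i
    have : Submodule.span k (Set.range v) ≤
        ((LinearMap.range g).comap B.mkQ).restrictScalars k := by
      rw [Submodule.span_le]
      rintro _ ⟨i, rfl⟩
      exact ⟨Pi.single i 1, by rw [hg]; simp [Pi.single_apply, apply_ite f]⟩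
    have := this (hspan (hxV i))
    rw [← hx' i]
    exact this
  choose e he using hxg
  -- a relation in `H ⧸ B` comes from the flat submodule spanned by the `v i`
  have hrel : ∑ i, r i • (LinearMap.ker g).mkQ (e i) = 0 := by
    simp only [← map_smul, ← map_sum]
    rw [Submodule.mkQ_apply, Submodule.Quotient.mk_eq_zero, LinearMap.mem_ker]
    simpa [he] using hrx
  obtain ⟨m, α, y, hy, hα⟩ := Module.Flat.isTrivialRelation_of_sum_smul_eq_zero hrel
  refine ⟨m, α, fun j => (LinearMap.ker g).liftQ g le_rfl (y j), fun i => ?_, hα⟩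
  have := congrArg ((LinearMap.ker g).liftQ g le_rfl) (hy i)
  simpa [he] using this

/-- Takeuchi's theorem: an injective morphism of commutative Hopf algebras over a
field is faithfully flat. -/
theorem takeuchi_faithfully_flat
    (k : Type*) [Field k]
    (H₁ H₂ : Type*) [CommRing H₁] [CommRing H₂]
    [HopfAlgebra k H₁] [HopfAlgebra k H₂]
    (f : H₁ →ₐc[k] H₂) (hf : Function.Injective f) :
    letI : Algebra H₁ H₂ := ((f : H₁ →ₐ[k] H₂) : H₁ →+* H₂).toAlgebra
    Module.FaithfullyFlat H₁ H₂ := by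
  letI : Algebra H₁ H₂ := ((f : H₁ →ₐ[k] H₂) : H₁ →+* H₂).toAlgebra
  have hfA : ∀ a, algebraMap H₁ H₂ a = f a := fun a => rfl
  have : IsScalarTower k H₁ H₂ := IsScalarTower.of_algebraMap_eq fun c => by
    rw [hfA]
    exact ((f : H₁ →ₐ[k] H₂).commutes c).symm
  -- the Hopf module `H₂`, as the case `B = 0`
  have hflat : Module.Flat H₁ H₂ := by
    have := flat_quotient_of_costable f hf hfA ⊥ (by simp)
    exact Module.Flat.of_linearEquiv (Submodule.quotEquivOfEqBot (⊥ : Submodule H₁ H₂) rfl).symm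
  -- the Hopf module `H₂ ⧸ H₁`
  have hflat' : Module.Flat H₁ (H₂ ⧸ LinearMap.range (Algebra.linearMap H₁ H₂)) := by
    refine flat_quotient_of_costable f hf hfA _ ?_
    rintro _ ⟨a, rfl⟩
    rw [Algebra.linearMap_apply, hfA]
    have h1 : TensorProduct.map (f : H₁ →ₗ[k] H₂) (f : H₁ →ₗ[k] H₂) (comul (R := k) a) =
        comul (R := k) (f a) := LinearMap.congr_fun (CoalgHomClass.map_comp_comul f) a
    rw [← h1, ← LinearMap.comp_apply, LinearMap.rTensor_comp_map]
    have h2 : (LinearMap.range (Algebra.linearMap H₁ H₂)).mkQ.restrictScalars k ∘ₗ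
        (f : H₁ →ₗ[k] H₂) = 0 := by
      ext b
      simpa using ⟨b, hfA b⟩
    rw [h2, TensorProduct.map_zero_left, LinearMap.zero_apply]
  refine ⟨fun m hm htop => hm.ne_top ?_⟩
  have h1 : (1 : H₂) ∈ m • (⊤ : Submodule H₁ H₂) := by rw [htop]; trivial
  -- write `1 = ∑ r i • i` with `r i ∈ m`; modulo `H₁` this is a relation, hence trivial, and
  -- correcting the vectors accordingly gives `1 = ∑ r i * b i` in `H₁`
  have hspan : Submodule.span H₁ (Set.range (id : H₂ → H₂)) = ⊤ := by simp
  rw [← hspan, Submodule.mem_ideal_smul_span_iff_exists_sum] at h1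
  obtain ⟨r, hr, h1⟩ := h1
  rw [Finsupp.sum, ← Finset.sum_coe_sort] at h1
  let q := (LinearMap.range (Algebra.linearMap H₁ H₂)).mkQ
  have hq1 : q 1 = 0 := by
    rw [Submodule.mkQ_apply, Submodule.Quotient.mk_eq_zero]
    exact ⟨1, by simp⟩
  have hrel : ∑ i : r.support, r i • q i = 0 := by
    simpa only [map_sum, map_smul, hq1, id] using congrArg q h1
  obtain ⟨n, α, y, hy, hα⟩ := Module.Flat.isTrivialRelation_of_sum_smul_eq_zero hrel
  choose y' hy' using fun j => Submodule.mkQ_surjective _ (y j)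
  have hb : ∀ i : r.support, ∃ b : H₁, f b = (i : H₂) - ∑ j, α i j • y' j := by
    intro i
    have : q ((i : H₂) - ∑ j, α i j • y' j) = 0 := by
      simp only [map_sub, map_sum, map_smul]
      rw [sub_eq_zero]
      exact (hy i).trans (by simp only [q, hy'])
    rw [Submodule.mkQ_apply, Submodule.Quotient.mk_eq_zero] at this
    exact this
  choose b hb using hb
  have h2 : ∑ i : r.support, r i * b i = 1 := by
    apply hf
    have h3 : ∑ i : r.support, r i • ∑ j, α i j • y' j = 0 := by
      simp only [Finset.smul_sum, smul_smul]
      rw [Finset.sum_comm]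
      simp only [← Finset.sum_smul, hα, zero_smul, Finset.sum_const_zero]
    rw [map_one, ← h1, map_sum, ← sub_zero (∑ i, _ • _), ← h3, ← Finset.sum_sub_distrib]
    refine Finset.sum_congr rfl fun i _ => ?_
    rw [map_mul, hb, ← smul_sub, Algebra.smul_def, hfA]
    rfl
  rw [Ideal.eq_top_iff_one, ← h2]
  exact m.sum_mem fun i _ => m.mul_mem_right _ (hr i)
end

section
/- Let H be a commutative Hopf algebra over a field k and let I be a Hopf ideal of H such that for all x ∈ I, x₁ S(x₃) ⊗ x₂ ∈ H ⊗ I. Then I is stable under the right adjoint coaction in the sense that the quotient map π : H → H/I is conormal: I equals H·A⁺ for A = {a ∈ H : a₁ ⊗ π(a₂) = a ⊗ π(1)} the subalgebra of coinvariants, at least the containment H·A⁺ ⊆ I holds where A is the coinvariant subalgebra of π. -/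
/-!
Write `G = Spec H` and `N = Spec (H ⧸ I)`, and let `R` be a commutative `k`-algebra. The `R`-points
of `G` are the algebra maps `H →ₐ[k] R` under convolution, and those of `N` are the ones that
vanish on `I`. Three translations reduce the theorem to computing with points:

* `a` is a right coinvariant iff `a(gn) = a(g)` for all points `g` of `G` and `n` of `N`
  (`convMul_apply_of_mem_coinvariants`; the universal pair of points has values in
  `H ⊗ (H ⧸ I)`);
* the hypothesis on `hopfAd` says that `N` is normal: `g n g⁻¹` is a point of `N`
  (`conj_apply_eq_zero`);
* stability of `I` under the antipode says that `n⁻¹` is a point of `N`.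

For a coinvariant `a`, `a((gn)⁻¹) = a(g⁻¹ (g n⁻¹ g⁻¹)) = a(g⁻¹)` shows that `S(a)` is coinvariant,
and `a(gnh) = a(gh (h⁻¹ n h)) = a(gh)`, `a(hgn) = a(hg)` show that `Δ(a)` lies in `A ⊗ H` and in
`H ⊗ A`. Over a field these meet in `A ⊗ A`
(`mem_range_map_of_exact`). Finally, specialising to `g = 1` and `n = π`
gives `π(a) = ε(a)`, hence `A⁺ ⊆ I`.
-/

open TensorProduct Coalgebra HopfAlgebra

/-- The map `ad(x) = x₁ S(x₃) ⊗ x₂` of a Hopf algebra, as a linear map. -/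
noncomputable def hopfAd (k H : Type*) [CommSemiring k] [CommSemiring H]
    [HopfAlgebra k H] : H →ₗ[k] H ⊗[k] H :=
  (LinearMap.mul' k H).rTensor H ∘ₗ
  (TensorProduct.assoc k H H H).symm.toLinearMap ∘ₗ
  ((TensorProduct.comm k H H).toLinearMap.lTensor H) ∘ₗ
  (TensorProduct.assoc k H H H).toLinearMap ∘ₗ
  (antipode (R := k) (A := H)).lTensor (H ⊗[k] H) ∘ₗ
  (comul (R := k) (A := H)).rTensor H ∘ₗ
  comul (R := k) (A := H)

open WithConv

section Points

variable {k H R : Type*} [Field k] [CommRing H] [HopfAlgebra k H] [CommRing R] [Algebra k R]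

/-- The inverse `g ∘ S` of an `R`-point `g`. Mathlib's group structure on points asks for a
bialgebra structure on `R`, which is not available here. -/
noncomputable def pointInv (g : WithConv (H →ₐ[k] R)) : WithConv (H →ₐ[k] R) :=
  toConv (g.ofConv.comp (antipodeAlgHom k H))

lemma pointInv_apply (g : WithConv (H →ₐ[k] R)) (a : H) :
    pointInv g a = g (antipode k a) := rfl

lemma pointInv_mul (g : WithConv (H →ₐ[k] R)) : pointInv g * g = 1 := by
  have h := AlgHom.comp_convMul_distrib g.ofConv (toConv (antipodeAlgHom k H))
    (toConv (AlgHom.id k H))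
  rw [AlgHom.antipode_id_cancel] at h
  apply WithConv.ofConv_injective
  refine Eq.trans h.symm ?_
  ext x
  simp [AlgHom.convOne_def, Algebra.ofId_apply]

lemma mul_pointInv (g : WithConv (H →ₐ[k] R)) : g * pointInv g = 1 := by
  have h1 := pointInv_mul g
  have h2 := pointInv_mul (pointInv g)
  have h3 : pointInv (pointInv g) = g := left_inv_eq_right_inv h2 h1
  rwa [h3] at h2

lemma pointInv_pointInv (g : WithConv (H →ₐ[k] R)) : pointInv (pointInv g) = g :=
  left_inv_eq_right_inv (pointInv_mul _) (pointInv_mul g)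

lemma pointInv_convMul (g h : WithConv (H →ₐ[k] R)) :
    pointInv (g * h) = pointInv h * pointInv g := by
  refine left_inv_eq_right_inv (pointInv_mul _) ?_
  rw [mul_assoc, ← mul_assoc h, mul_pointInv, one_mul, mul_pointInv]

/-- Evaluating `hopfAd x` at a pair of points `(g, n)` gives `x(g n g⁻¹)`. -/
lemma lift_hopfAd (g n : WithConv (H →ₐ[k] R)) (x : H) :
    Algebra.TensorProduct.lift g.ofConv n.ofConv (fun _ _ ↦ .all ..) (hopfAd k H x) =
      (g * n * pointInv g) x := by
  rw [AlgHom.convMul_apply]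
  simp only [hopfAd, LinearMap.comp_apply]
  induction comul (R := k) x with
  | zero => simp
  | add s t hs ht => simp only [map_add, hs, ht]
  | tmul a b =>
    have h : (g * n).ofConv a = _ := AlgHom.convMul_apply g n a
    rw [Algebra.TensorProduct.lift_tmul, h]
    simp only [LinearMap.rTensor_tmul]
    induction comul (R := k) a with
    | zero => simp
    | add s t hs ht => simp only [map_add, TensorProduct.add_tmul, hs, ht, add_mul]
    | tmul c d =>
      have hb : (pointInv g).ofConv b = g.ofConv (antipode k b) := rfl
      simp [hb]
      ring

lemma lift_eq_zero_of_mem_range {I : Ideal H} (g n : WithConv (H →ₐ[k] R))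
    (hn : ∀ x ∈ I, n x = 0) {t : H ⊗[k] H}
    (ht : t ∈ LinearMap.range (TensorProduct.map (LinearMap.id (M := H))
        (I.restrictScalars k).subtype)) :
    Algebra.TensorProduct.lift g.ofConv n.ofConv (fun _ _ ↦ .all ..) t = 0 := by
  obtain ⟨s, rfl⟩ := ht
  induction s with
  | zero => simp
  | add s t hs ht => simp only [map_add, hs, ht, add_zero]
  | tmul a b =>
    have hb : n.ofConv (b : H) = 0 := hn b b.2
    simp [hb]

/-- Normality: conjugating a point of `Spec (H ⧸ I)` by a point of `Spec H` gives a point of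
`Spec (H ⧸ I)`. -/
lemma conj_apply_eq_zero {I : Ideal H}
    (had : ∀ x ∈ I, hopfAd k H x ∈
      LinearMap.range (TensorProduct.map (LinearMap.id (M := H))
        (I.restrictScalars k).subtype))
    (g n : WithConv (H →ₐ[k] R)) (hn : ∀ x ∈ I, n x = 0) :
    ∀ x ∈ I, (g * n * pointInv g) x = 0 := fun x hx ↦ by
  rw [← lift_hopfAd, lift_eq_zero_of_mem_range g n hn (had x hx)]

end Points

/-- Over a field, `(A ⊗ M) ∩ (M ⊗ A) = A ⊗ A` inside `M ⊗ M`, for `A` the kernel of a linear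
map `δ`. -/
lemma mem_range_map_of_exact {k A M P : Type*} [Field k] [AddCommGroup A] [Module k A]
    [AddCommGroup M] [Module k M] [AddCommGroup P] [Module k P] {ι : A →ₗ[k] M} {δ : M →ₗ[k] P}
    (hι : Function.Injective ι) (h : Function.Exact ι δ) {t : M ⊗[k] M}
    (hl : δ.lTensor M t = 0) (hr : δ.rTensor M t = 0) :
    t ∈ LinearMap.range (TensorProduct.map ι ι) := by
  obtain ⟨s, rfl⟩ := (Module.Flat.rTensor_exact M h t).mp hr
  have hs : ι.rTensor P (δ.lTensor A s) = 0 := by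
    rw [← LinearMap.comp_apply, LinearMap.rTensor_comp_lTensor, ← LinearMap.lTensor_comp_rTensor,
      LinearMap.comp_apply, hl]
  have hs' : δ.lTensor A s = 0 :=
    Module.Flat.rTensor_preserves_injective_linearMap ι hι (hs.trans (map_zero _).symm)
  obtain ⟨u, rfl⟩ := (Module.Flat.lTensor_exact A h s).mp hs'
  exact ⟨u, by rw [← LinearMap.comp_apply, LinearMap.rTensor_comp_lTensor]⟩

section Coinvariants

variable {k H : Type*} [Field k] [CommRing H] [HopfAlgebra k H] (I : Ideal H)

variable (k) in
/-- The universal point `h ↦ h ⊗ 1` of `Spec H`, with values in `H ⊗ H ⧸ I`. -/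
noncomputable def univPoint : WithConv (H →ₐ[k] H ⊗[k] (H ⧸ I)) :=
  toConv Algebra.TensorProduct.includeLeft

variable (k) in
/-- The universal point `h ↦ 1 ⊗ π(h)` of `Spec (H ⧸ I)`, with values in `H ⊗ H ⧸ I`. -/
noncomputable def univQuotPoint : WithConv (H →ₐ[k] H ⊗[k] (H ⧸ I)) :=
  toConv (Algebra.TensorProduct.includeRight.comp (Ideal.Quotient.mkₐ k I))

lemma univQuotPoint_eq_zero : ∀ x ∈ I, univQuotPoint k I x = 0 := fun x hx ↦ by
  change (1 : H) ⊗ₜ[k] (Ideal.Quotient.mk I x) = 0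
  rw [Ideal.Quotient.eq_zero_iff_mem.mpr hx, TensorProduct.tmul_zero]

variable (k) in
/-- The subalgebra of right coinvariants of `H → H ⧸ I`: the elements with
`a₁ ⊗ π(a₂) = a ⊗ 1`. -/
noncomputable def coinvariants : Subalgebra k H :=
  AlgHom.equalizer (univPoint k I * univQuotPoint k I).ofConv (univPoint k I).ofConv

lemma mem_coinvariants {a : H} :
    a ∈ coinvariants k I ↔ (univPoint k I * univQuotPoint k I) a = univPoint k I a := Iff.rfl

lemma mem_coinvariants_iff {a : H} :
    a ∈ coinvariants k I ↔ comul (R := k) a - a ⊗ₜ[k] (1 : H) ∈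
        LinearMap.range (TensorProduct.map (LinearMap.id (M := H))
          (I.restrictScalars k).subtype) := by
  have hex : Function.Exact (I.restrictScalars k).subtype
      (Ideal.Quotient.mkₐ k I).toLinearMap := fun x ↦ by
    simp [Ideal.Quotient.eq_zero_iff_mem]
  have h := lTensor_exact H hex (Ideal.Quotient.mkₐ_surjective k I)
    (comul (R := k) a - a ⊗ₜ[k] (1 : H))
  have hl : (Algebra.TensorProduct.lift (univPoint k I).ofConv (univQuotPoint k I).ofConv
      (fun _ _ ↦ .all ..)).toLinearMap =
      (Ideal.Quotient.mkₐ k I).toLinearMap.lTensor H := by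
    ext x y
    simp [univPoint, univQuotPoint]
  refine Iff.trans ?_ h
  rw [mem_coinvariants, AlgHom.convMul_apply, ← hl, map_sub, sub_eq_zero]
  have h1 : (Algebra.TensorProduct.lift (univPoint k I).ofConv (univQuotPoint k I).ofConv
      (fun _ _ ↦ .all ..)).toLinearMap (a ⊗ₜ[k] (1 : H)) = univPoint k I a := by
    rw [AlgHom.toLinearMap_apply, Algebra.TensorProduct.lift_tmul, map_one, mul_one]
  rw [h1]
  rfl

variable {I} {R : Type*} [CommRing R] [Algebra k R]

/-- Coinvariants are invariant under right translation by every point of `Spec (H ⧸ I)`. -/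
lemma convMul_apply_of_mem_coinvariants {a : H} (ha : a ∈ coinvariants k I)
    (g n : WithConv (H →ₐ[k] R)) (hn : ∀ x ∈ I, n x = 0) : (g * n) a = g a := by
  have h := lift_eq_zero_of_mem_range g n hn ((mem_coinvariants_iff I).mp ha)
  rw [map_sub, sub_eq_zero, ← AlgHom.convMul_apply, Algebra.TensorProduct.lift_tmul, map_one,
    mul_one] at h
  exact h

/-- By normality, `gnh = gh (h⁻¹ n h)` differs from `gh` by a point of `Spec (H ⧸ I)`. -/
lemma convMul_convMul_apply_of_mem_coinvariants
    (had : ∀ x ∈ I, hopfAd k H x ∈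
      LinearMap.range (TensorProduct.map (LinearMap.id (M := H))
        (I.restrictScalars k).subtype))
    {a : H} (ha : a ∈ coinvariants k I)
    (g n h : WithConv (H →ₐ[k] R)) (hn : ∀ x ∈ I, n x = 0) :
    (g * n * h) a = (g * h) a := by
  rw [← convMul_apply_of_mem_coinvariants ha (g * h) (pointInv h * n * pointInv (pointInv h))
    (conj_apply_eq_zero had (pointInv h) n hn), pointInv_pointInv]
  congr 1
  simp only [mul_assoc]
  rw [← mul_assoc h, mul_pointInv, one_mul]

/-- The identity `a((gn)⁻¹) = a(g⁻¹)`, which says that `S(a)` is coinvariant. -/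
lemma convMul_antipode_apply_of_mem_coinvariants
    (hS : ∀ x ∈ I, antipode (R := k) x ∈ I)
    (had : ∀ x ∈ I, hopfAd k H x ∈
      LinearMap.range (TensorProduct.map (LinearMap.id (M := H))
        (I.restrictScalars k).subtype))
    {a : H} (ha : a ∈ coinvariants k I)
    (g n : WithConv (H →ₐ[k] R)) (hn : ∀ x ∈ I, n x = 0) :
    (g * n) (antipode k a) = g (antipode k a) := by
  rw [← pointInv_apply, ← pointInv_apply, pointInv_convMul]
  have h := convMul_convMul_apply_of_mem_coinvariants had ha 1 (pointInv n) (pointInv g)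
    (fun x hx ↦ hn _ (hS x hx))
  rwa [one_mul, one_mul] at h

/-- The identity `a(gnh) = a(gh)` for the universal third point `h`, read in `R ⊗ H`: the left
legs of `Δ(a)` are coinvariant. This is where normality is used. -/
lemma rTensor_comul_of_mem_coinvariants
    (had : ∀ x ∈ I, hopfAd k H x ∈
      LinearMap.range (TensorProduct.map (LinearMap.id (M := H))
        (I.restrictScalars k).subtype))
    {a : H} (ha : a ∈ coinvariants k I)
    (g n : WithConv (H →ₐ[k] R)) (hn : ∀ x ∈ I, n x = 0) :
    ((g * n).ofConv.toLinearMap - g.ofConv.toLinearMap).rTensor H (comul (R := k) a) = 0 := by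
  let i : R →ₐ[k] R ⊗[k] H := Algebra.TensorProduct.includeLeft
  let r : H →ₐ[k] R ⊗[k] H := Algebra.TensorProduct.includeRight
  have key (f : H →ₐ[k] R) :
      f.toLinearMap.rTensor H (comul (R := k) a) = (toConv (i.comp f) * toConv r) a := by
    rw [AlgHom.convMul_apply, ← AlgHom.toLinearMap_apply]
    congr 1
    ext x y
    simp [i, r]
  rw [LinearMap.rTensor_sub, LinearMap.sub_apply, key, key,
    AlgHom.comp_convMul_distrib, toConv_ofConv, sub_eq_zero]
  refine convMul_convMul_apply_of_mem_coinvariants had ha _ _ _ fun x hx ↦ ?_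
  exact (congrArg i (hn x hx)).trans (map_zero i)

/-- The identity `a(hgn) = a(hg)` for the universal third point `h`, read in `H ⊗ R`: the right
legs of `Δ(a)` are coinvariant. -/
lemma lTensor_comul_of_mem_coinvariants {a : H} (ha : a ∈ coinvariants k I)
    (g n : WithConv (H →ₐ[k] R)) (hn : ∀ x ∈ I, n x = 0) :
    ((g * n).ofConv.toLinearMap - g.ofConv.toLinearMap).lTensor H (comul (R := k) a) = 0 := by
  let i : R →ₐ[k] H ⊗[k] R := Algebra.TensorProduct.includeRight
  let l : H →ₐ[k] H ⊗[k] R := Algebra.TensorProduct.includeLeft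
  have key (f : H →ₐ[k] R) :
      f.toLinearMap.lTensor H (comul (R := k) a) = (toConv l * toConv (i.comp f)) a := by
    rw [AlgHom.convMul_apply, ← AlgHom.toLinearMap_apply]
    congr 1
    ext x y
    simp [i, l]
  rw [LinearMap.lTensor_sub, LinearMap.sub_apply, key, key,
    AlgHom.comp_convMul_distrib, toConv_ofConv, sub_eq_zero, ← mul_assoc]
  refine convMul_apply_of_mem_coinvariants ha _ _ fun x hx ↦ ?_
  exact (congrArg i (hn x hx)).trans (map_zero i)

/-- The pair `(g, n)` only needs to be fine enough to detect coinvariance, so that the coinvariants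
are the kernel of `a ↦ a(gn) - a(g)`. -/
lemma comul_mem_range_of_mem_coinvariants
    (had : ∀ x ∈ I, hopfAd k H x ∈
      LinearMap.range (TensorProduct.map (LinearMap.id (M := H))
        (I.restrictScalars k).subtype))
    {a : H} (ha : a ∈ coinvariants k I)
    (g n : WithConv (H →ₐ[k] R)) (hn : ∀ x ∈ I, n x = 0)
    (hgn : ∀ b : H, (g * n) b = g b → b ∈ coinvariants k I) :
    comul (R := k) a ∈ LinearMap.range (TensorProduct.map (coinvariants k I).val.toLinearMap
      (coinvariants k I).val.toLinearMap) := by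
  refine mem_range_map_of_exact (δ := (g * n).ofConv.toLinearMap - g.ofConv.toLinearMap)
    Subtype.val_injective (fun b ↦ ⟨fun hb ↦ ?_, ?_⟩)
    (lTensor_comul_of_mem_coinvariants ha g n hn) (rTensor_comul_of_mem_coinvariants had ha g n hn)
  · exact ⟨⟨b, hgn b (sub_eq_zero.mp hb)⟩, rfl⟩
  · rintro ⟨c, rfl⟩
    exact sub_eq_zero.mpr (convMul_apply_of_mem_coinvariants c.2 g n hn)

end Coinvariants

/-- Let `H` be a commutative Hopf algebra over a field `k` and `I` a Hopf ideal
satisfying `x₁ S(x₃) ⊗ x₂ ∈ H ⊗ I` for all `x ∈ I`.  Then the set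
`A = {a : Δ(a) - a ⊗ 1 ∈ H ⊗ I}` of right coinvariants of the quotient map
`π : H → H/I` is a Hopf subalgebra of `H` and `H·A⁺ ⊆ I`. -/
theorem coinvariants_hopf_subalgebra_and_span_le
    (k H : Type*) [Field k] [CommRing H] [HopfAlgebra k H]
    (I : Ideal H)
    (hΔ : ∀ x ∈ I, comul (R := k) x ∈
      LinearMap.range (TensorProduct.map (I.restrictScalars k).subtype (LinearMap.id (M := H))) ⊔
      LinearMap.range (TensorProduct.map (LinearMap.id (M := H)) (I.restrictScalars k).subtype))
    (hε : ∀ x ∈ I, counit (R := k) x = (0 : k))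
    (hS : ∀ x ∈ I, antipode (R := k) x ∈ I)
    (had : ∀ x ∈ I, hopfAd k H x ∈
      LinearMap.range (TensorProduct.map (LinearMap.id (M := H))
        (I.restrictScalars k).subtype)) :
    ∃ A : Subalgebra k H,
      (A : Set H) = {a : H | comul (R := k) a - a ⊗ₜ[k] (1 : H) ∈
        LinearMap.range (TensorProduct.map (LinearMap.id (M := H))
          (I.restrictScalars k).subtype)} ∧
      (∀ a ∈ A, comul (R := k) a ∈
        LinearMap.range (TensorProduct.map A.val.toLinearMap A.val.toLinearMap)) ∧
      (∀ a ∈ A, antipode (R := k) a ∈ A) ∧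
      Ideal.span ((A : Set H) ∩ (counit (R := k) (A := H) ⁻¹' {0})) ≤ I := by
  refine ⟨coinvariants k I, Set.ext fun a ↦ mem_coinvariants_iff I, fun a ha ↦ ?_,
    fun a ha ↦ convMul_antipode_apply_of_mem_coinvariants hS had ha _ _
      (univQuotPoint_eq_zero I), ?_⟩
  · exact comul_mem_range_of_mem_coinvariants had ha _ _ (univQuotPoint_eq_zero I)
      fun _ hb ↦ (mem_coinvariants I).mpr hb
  · rw [Ideal.span_le]
    rintro a ⟨ha, ha0⟩
    -- Invariance at `g = 1`, `n = π` reads `π(a) = ε(a)`.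
    have h := convMul_apply_of_mem_coinvariants ha 1
      (WithConv.toConv (Ideal.Quotient.mkₐ k I))
      (fun x hx ↦ Ideal.Quotient.eq_zero_iff_mem.mpr hx)
    have ha0' : counit (R := k) a = 0 := ha0
    rw [one_mul, AlgHom.convOne_apply, ha0', map_zero] at h
    exact Ideal.Quotient.eq_zero_iff_mem.mp h
end
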